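/- For arbitrary nodal positions X_1,…,X_15 ∈ ℝ³ of the fifteen-node wedge element, the metric J(ξ,η,ζ) = det(J_mn) is a polynomial in (ξ,η,ζ) whose every monomial ξ^a η^b ζ^c satisfies a + b ≤ 4, c ≤ 5, and a + b + c ≤ 6; in particular the metric has total degree at most 6. -/

import Mathlib

open MeasureTheory MvPolynomial

/-- The fifteen shape functions of the 15-node wedge element, in natural
coordinates `x = (ξ, η, ζ)` with `ξ = x 0`, `η = x 1`, `ζ = x 2`. -/
noncomputable def wedgeShape : Fin 15 → (Fin 3 → ℝ) → ℝ :=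
  ![fun x => -((1 - x 0 - x 1) * (1 - x 2) * (2 * x 0 + 2 * x 1 + x 2)) / 2,
    fun x => x 0 * (1 - x 2) * (2 * x 0 - x 2 - 2) / 2,
    fun x => x 1 * (1 - x 2) * (2 * x 1 - x 2 - 2) / 2,
    fun x => -((1 - x 0 - x 1) * (1 + x 2) * (2 * x 0 + 2 * x 1 - x 2)) / 2,
    fun x => x 0 * (1 + x 2) * (2 * x 0 + x 2 - 2) / 2,
    fun x => x 1 * (1 + x 2) * (2 * x 1 + x 2 - 2) / 2,
    fun x => 2 * x 0 * (1 - x 0 - x 1) * (1 - x 2),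
    fun x => 2 * x 0 * x 1 * (1 - x 2),
    fun x => 2 * x 1 * (1 - x 0 - x 1) * (1 - x 2),
    fun x => 2 * x 0 * (1 - x 0 - x 1) * (1 + x 2),
    fun x => 2 * x 0 * x 1 * (1 + x 2),
    fun x => 2 * x 1 * (1 - x 0 - x 1) * (1 + x 2),
    fun x => (1 - x 0 - x 1) * (1 - x 2 ^ 2),
    fun x => x 0 * (1 - x 2 ^ 2),
    fun x => x 1 * (1 - x 2 ^ 2)]

/-- Natural coordinates of the fifteen nodes of the wedge element. -/
noncomputable def wedgeNode : Fin 15 → Fin 3 → ℝ :=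
  ![![0, 0, -1], ![1, 0, -1], ![0, 1, -1],
    ![0, 0, 1], ![1, 0, 1], ![0, 1, 1],
    ![1/2, 0, -1], ![1/2, 1/2, -1], ![0, 1/2, -1],
    ![1/2, 0, 1], ![1/2, 1/2, 1], ![0, 1/2, 1],
    ![0, 0, 0], ![1, 0, 0], ![0, 1, 0]]

/-- Reference domain of the fifteen-node wedge element. -/
def wedgeDomain : Set (Fin 3 → ℝ) :=
  {x | 0 ≤ x 0 ∧ 0 ≤ x 1 ∧ x 0 + x 1 ≤ 1 ∧ -1 ≤ x 2 ∧ x 2 ≤ 1}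

/-- Linear-metric (LM) interpolation functions. -/
noncomputable def phiLM : Fin 4 → (Fin 3 → ℝ) → ℝ :=
  ![fun x => 83/12 - 10 * x 0 - 10 * x 1 - 10 * x 2,
    fun x => -37/12 + 10 * x 0,
    fun x => -37/12 + 10 * x 1,
    fun x => 1/4 + 10 * x 2]

/-- The four LM evaluation points. -/
noncomputable def ptLM : Fin 4 → Fin 3 → ℝ :=
  ![![37/120, 37/120, -1/40], ![49/120, 37/120, -1/40],
    ![37/120, 49/120, -1/40], ![37/120, 37/120, 3/40]]

/-- Quadratic-metric (QM) interpolation functions. -/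
noncomputable def phiQM : Fin 10 → (Fin 3 → ℝ) → ℝ :=
  ![fun x => 6391/72 - (800/3) * x 0 - (800/3) * x 1 - (800/3) * x 2
      + 400 * x 0 * x 1 + 400 * x 0 * x 2 + 400 * x 1 * x 2
      + 200 * x 0 ^ 2 + 200 * x 1 ^ 2 + 200 * x 2 ^ 2,
    fun x => 1591/72 - (400/3) * x 0 + 200 * x 0 ^ 2,
    fun x => 1591/72 - (400/3) * x 1 + 200 * x 1 ^ 2,
    fun x => -1/8 + 200 * x 2 ^ 2,
    fun x => -3071/36 + 400 * x 0 + (370/3) * x 1 + (370/3) * x 2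
      - 400 * x 0 * x 1 - 400 * x 0 * x 2 - 400 * x 0 ^ 2,
    fun x => 1369/36 - (370/3) * x 0 - (370/3) * x 1 + 400 * x 0 * x 1,
    fun x => -3071/36 + (370/3) * x 0 + 400 * x 1 + (370/3) * x 2
      - 400 * x 0 * x 1 - 400 * x 1 * x 2 - 400 * x 1 ^ 2,
    fun x => 83/12 - 10 * x 0 - 10 * x 1 + (800/3) * x 2
      - 400 * x 0 * x 2 - 400 * x 1 * x 2 - 400 * x 2 ^ 2,
    fun x => -37/12 + 10 * x 0 - (370/3) * x 2 + 400 * x 0 * x 2,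
    fun x => -37/12 + 10 * x 1 - (370/3) * x 2 + 400 * x 1 * x 2]

/-- The ten QM evaluation points. -/
noncomputable def ptQM : Fin 10 → Fin 3 → ℝ :=
  ![![37/120, 37/120, -1/40], ![49/120, 37/120, -1/40],
    ![37/120, 49/120, -1/40], ![37/120, 37/120, 3/40],
    ![43/120, 37/120, -1/40], ![43/120, 43/120, -1/40],
    ![37/120, 43/120, -1/40], ![37/120, 37/120, 1/40],
    ![43/120, 37/120, 1/40], ![37/120, 43/120, 1/40]]

/-- The isoparametric map of the wedge element with nodal positions `X`. -/
noncomputable def wedgeMap (X : Fin 15 → Fin 3 → ℝ) (u : Fin 3 → ℝ) : Fin 3 → ℝ :=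
  fun m => ∑ i : Fin 15, wedgeShape i u * X i m

/-- The Jacobian matrix `J_mn = ∂X_m/∂u_n` of the isoparametric map. -/
noncomputable def wedgeJac (X : Fin 15 → Fin 3 → ℝ) (u : Fin 3 → ℝ) :
    Matrix (Fin 3) (Fin 3) ℝ :=
  Matrix.of fun m n => fderiv ℝ (fun v => wedgeMap X v m) u (Pi.single n 1)

/-- The metric (Jacobian determinant) of the isoparametric map. -/
noncomputable def wedgeMetric (X : Fin 15 → Fin 3 → ℝ) (u : Fin 3 → ℝ) : ℝ :=
  (wedgeJac X u).det

/-!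
Give `ξ`, `η`, `ζ` weights `w 0`, `w 1`, `w 2`. Every shape function is a product of three affine
factors, one in `(ξ, η)`, one in `ζ` and one in all three coordinates, so its weighted degree is at
most `N = max (w 0) (w 1) + w 2 + max (w 0) (w 1) (w 2)`. Differentiating in the coordinate `n`
lowers this to `N - w n`, and each term of the Jacobian determinant has one factor from every
column, so its weighted degree is at most `∑ n, (N - w n)`. The weights `(1, 1, 0)`, `(0, 0, 1)` and
`(1, 1, 1)` give the bounds `1 + 1 + 2`, `2 + 2 + 1` and `2 + 2 + 2`.
-/

theorem det_mem_graded {n ι S A : Type*} [Fintype n] [DecidableEq n] [AddCommMonoid ι] [CommRing A]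
    [SetLike S A] [AddSubgroupClass S A] (𝒜 : ι → S) [SetLike.GradedMonoid 𝒜]
    {M : Matrix n n A} {k : n → ι} (hM : ∀ i j, M i j ∈ 𝒜 (k j)) :
    M.det ∈ 𝒜 (∑ j, k j) := by
  rw [Matrix.det_apply]
  refine sum_mem fun σ _ => ?_
  rw [Units.smul_def]
  exact zsmul_mem (SetLike.prod_mem_graded 𝒜 k (fun j => M (σ j) j) fun j _ => hM (σ j) j) _

section WeightedDegree

variable {σ R : Type*}

/-- The polynomials of `w`-weighted total degree at most `n`, as a submodule; for varying `n` these
form the filtration of `MvPolynomial σ R` attached to the weights `w`. -/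
noncomputable def weightedDegreeLE (R : Type*) [CommSemiring R] (w : σ → ℕ) (n : ℕ) :
    Submodule R (MvPolynomial σ R) :=
  restrictSupport R {d | Finsupp.weight w d ≤ n}

section CommSemiring

variable [CommSemiring R] {w : σ → ℕ} {m n : ℕ}

theorem mem_weightedDegreeLE {p : MvPolynomial σ R} :
    p ∈ weightedDegreeLE R w n ↔ ∀ d ∈ p.support, Finsupp.weight w d ≤ n :=
  .rfl

theorem weightedDegreeLE_mono (h : m ≤ n) : weightedDegreeLE R w m ≤ weightedDegreeLE R w n :=
  restrictSupport_mono R fun _ hd => le_trans hd h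

theorem C_mem_weightedDegreeLE (r : R) : C r ∈ weightedDegreeLE R w n :=
  (monomial_mem_restrictSupport R).2 (.inl (by simp))

theorem X_mem_weightedDegreeLE {i : σ} (h : w i ≤ n) : X i ∈ weightedDegreeLE R w n :=
  (monomial_mem_restrictSupport R).2 (.inl (by simpa [Finsupp.weight_single] using h))

open scoped Pointwise in
instance weightedDegreeLE.gradedMonoid : SetLike.GradedMonoid (weightedDegreeLE R w) where
  one_mem := C_mem_weightedDegreeLE 1
  mul_mem i j p q hp hq := by
    have hpq := Submodule.mul_mem_mul hp hq
    rw [weightedDegreeLE, weightedDegreeLE, ← restrictSupport_add] at hpq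
    refine restrictSupport_mono R ?_ hpq
    rintro _ ⟨d, hd, e, he, rfl⟩
    simpa only [Set.mem_ofPred_eq, map_add] using add_le_add hd he

theorem pderiv_mem_weightedDegreeLE {p : MvPolynomial σ R} (hp : p ∈ weightedDegreeLE R w n)
    (i : σ) : pderiv i p ∈ weightedDegreeLE R w (n - w i) := by
  rw [mem_weightedDegreeLE] at hp ⊢
  intro d hd
  have hd' : d + Finsupp.single i 1 ∈ p.support := by
    rw [mem_support_iff, coeff_pderiv] at hd
    exact mem_support_iff.2 (left_ne_zero_of_mul hd)
  have hweight : Finsupp.weight w d + w i ≤ n := by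
    simpa [Finsupp.weight_single] using hp _ hd'
  exact Nat.le_sub_of_add_le hweight

end CommSemiring

/-- The Jacobian matrix `∂p_m/∂x_n` of a family of polynomials. -/
noncomputable def polyJacobian {ι : Type*} [CommSemiring R] (p : ι → MvPolynomial σ R) :
    Matrix ι σ (MvPolynomial σ R) :=
  Matrix.of fun m n => pderiv n (p m)

theorem det_polyJacobian_mem_weightedDegreeLE [Fintype σ] [DecidableEq σ] [CommRing R]
    {w : σ → ℕ} {n : ℕ} {p : σ → MvPolynomial σ R} (hp : ∀ i, p i ∈ weightedDegreeLE R w n) :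
    (polyJacobian p).det ∈ weightedDegreeLE R w (∑ j, (n - w j)) :=
  det_mem_graded (weightedDegreeLE R w) fun i j => pderiv_mem_weightedDegreeLE (hp i) j

end WeightedDegree

section EvalDerivative

variable {σ 𝕜 : Type*} [NontriviallyNormedField 𝕜]

theorem hasFDerivAt_eval [Fintype σ] (p : MvPolynomial σ 𝕜) (u : σ → 𝕜) :
    HasFDerivAt (fun v => eval v p)
      (∑ i, eval u (pderiv i p) • (ContinuousLinearMap.proj i : (σ → 𝕜) →L[𝕜] 𝕜)) u := by
  classical
  induction p using MvPolynomial.induction_on with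
  | C a =>
    simp only [eval_C]
    refine (hasFDerivAt_const a u).congr_fderiv ?_
    ext v
    simp
  | add p q hp hq =>
    simp only [map_add]
    refine (hp.add hq).congr_fderiv ?_
    ext v
    simp [add_mul, Finset.sum_add_distrib]
  | mul_X p j hp =>
    simp only [map_mul, eval_X]
    refine (hp.mul (ContinuousLinearMap.proj j : (σ → 𝕜) →L[𝕜] 𝕜).hasFDerivAt).congr_fderiv ?_
    ext v
    simp [pderiv_X, Pi.single_apply, apply_ite, add_mul, Finset.sum_add_distrib, Finset.mul_sum,
      mul_assoc]

theorem fderiv_eval_single [Finite σ] [DecidableEq σ] (p : MvPolynomial σ 𝕜) (u : σ → 𝕜) (i : σ) :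
    fderiv 𝕜 (fun v => eval v p) u (Pi.single i 1) = eval u (pderiv i p) := by
  cases nonempty_fintype σ
  simp [(hasFDerivAt_eval p u).fderiv, Pi.single_apply]

end EvalDerivative

/-- The shape functions of the wedge element as polynomials, each factored into an affine polynomial
in `(ξ, η)`, one in `ζ` and one in all three coordinates. -/
noncomputable def wedgeShapePoly : Fin 15 → MvPolynomial (Fin 3) ℝ :=
  let x : MvPolynomial (Fin 3) ℝ := X 0
  let y : MvPolynomial (Fin 3) ℝ := X 1
  let z : MvPolynomial (Fin 3) ℝ := X 2
  let l := 1 - x - y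
  ![l * (1 - z) * -(x + y + (1 / 2 : ℝ) • z),
    x * (1 - z) * (x - (1 / 2 : ℝ) • z - 1),
    y * (1 - z) * (y - (1 / 2 : ℝ) • z - 1),
    l * (1 + z) * -(x + y - (1 / 2 : ℝ) • z),
    x * (1 + z) * (x + (1 / 2 : ℝ) • z - 1),
    y * (1 + z) * (y + (1 / 2 : ℝ) • z - 1),
    l * (1 - z) * (2 : ℝ) • x,
    x * (1 - z) * (2 : ℝ) • y,
    l * (1 - z) * (2 : ℝ) • y,
    l * (1 + z) * (2 : ℝ) • x,
    x * (1 + z) * (2 : ℝ) • y,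
    l * (1 + z) * (2 : ℝ) • y,
    l * (1 - z) * (1 + z),
    x * (1 - z) * (1 + z),
    y * (1 - z) * (1 + z)]

theorem eval_wedgeShapePoly (i : Fin 15) (u : Fin 3 → ℝ) :
    eval u (wedgeShapePoly i) = wedgeShape i u := by
  fin_cases i <;> simp [wedgeShapePoly, wedgeShape, smul_eval] <;> ring

/-- The bound on the `w`-weighted degree of the shape functions given by their factorization into
affine polynomials in `(ξ, η)`, in `ζ` and in `(ξ, η, ζ)`. -/
def wedgeShapeDegree (w : Fin 3 → ℕ) : ℕ :=
  max (w 0) (w 1) + w 2 + max (max (w 0) (w 1)) (w 2)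

theorem wedgeShapePoly_mem_weightedDegreeLE (w : Fin 3 → ℕ) (i : Fin 15) :
    wedgeShapePoly i ∈ weightedDegreeLE ℝ w (wedgeShapeDegree w) := by
  let F := weightedDegreeLE ℝ w
  have mul_mul_mem {p q r : MvPolynomial (Fin 3) ℝ}
      (hp : p ∈ F (max (w 0) (w 1))) (hq : q ∈ F (w 2))
      (hr : r ∈ F (max (max (w 0) (w 1)) (w 2))) : p * q * r ∈ F (wedgeShapeDegree w) :=
    SetLike.mul_mem_graded (SetLike.mul_mem_graded hp hq) hr
  have one {n : ℕ} : 1 ∈ F n := C_mem_weightedDegreeLE 1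
  have x : X 0 ∈ F (max (w 0) (w 1)) := X_mem_weightedDegreeLE (le_max_left _ _)
  have y : X 1 ∈ F (max (w 0) (w 1)) := X_mem_weightedDegreeLE (le_max_right _ _)
  have l : 1 - X 0 - X 1 ∈ F (max (w 0) (w 1)) := sub_mem (sub_mem one x) y
  have z : X 2 ∈ F (w 2) := X_mem_weightedDegreeLE le_rfl
  have bot : 1 - X 2 ∈ F (w 2) := sub_mem one z
  have top : 1 + X 2 ∈ F (w 2) := add_mem one z
  have x' := weightedDegreeLE_mono (le_max_left _ (w 2)) x
  have y' := weightedDegreeLE_mono (le_max_left _ (w 2)) y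
  have z' := weightedDegreeLE_mono (le_max_right (max (w 0) (w 1)) _) z
  have half_z := Submodule.smul_mem _ (1 / 2 : ℝ) z'
  have two_x := Submodule.smul_mem _ (2 : ℝ) x'
  have two_y := Submodule.smul_mem _ (2 : ℝ) y'
  have top' := add_mem one z'
  fin_cases i
  exacts [mul_mul_mem l bot (neg_mem (add_mem (add_mem x' y') half_z)),
    mul_mul_mem x bot (sub_mem (sub_mem x' half_z) one),
    mul_mul_mem y bot (sub_mem (sub_mem y' half_z) one),
    mul_mul_mem l top (neg_mem (sub_mem (add_mem x' y') half_z)),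
    mul_mul_mem x top (sub_mem (add_mem x' half_z) one),
    mul_mul_mem y top (sub_mem (add_mem y' half_z) one),
    mul_mul_mem l bot two_x, mul_mul_mem x bot two_y, mul_mul_mem l bot two_y,
    mul_mul_mem l top two_x, mul_mul_mem x top two_y, mul_mul_mem l top two_y,
    mul_mul_mem l bot top', mul_mul_mem x bot top', mul_mul_mem y bot top']

/-- The components of the isoparametric map `wedgeMap` as polynomials. -/
noncomputable def wedgeMapPoly (X : Fin 15 → Fin 3 → ℝ) (m : Fin 3) : MvPolynomial (Fin 3) ℝ :=
  ∑ i, X i m • wedgeShapePoly i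

theorem eval_wedgeMapPoly (X : Fin 15 → Fin 3 → ℝ) (m : Fin 3) (u : Fin 3 → ℝ) :
    eval u (wedgeMapPoly X m) = wedgeMap X u m := by
  simp only [wedgeMapPoly, wedgeMap, map_sum, smul_eval, eval_wedgeShapePoly, mul_comm]

/-- The metric `wedgeMetric` as a polynomial. -/
noncomputable def wedgeMetricPoly (X : Fin 15 → Fin 3 → ℝ) : MvPolynomial (Fin 3) ℝ :=
  (polyJacobian (wedgeMapPoly X)).det

theorem wedgeMetricPoly_mem_weightedDegreeLE (X : Fin 15 → Fin 3 → ℝ) (w : Fin 3 → ℕ) :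
    wedgeMetricPoly X ∈ weightedDegreeLE ℝ w (∑ n, (wedgeShapeDegree w - w n)) :=
  det_polyJacobian_mem_weightedDegreeLE fun m =>
    sum_mem fun i _ => Submodule.smul_mem _ (X i m) (wedgeShapePoly_mem_weightedDegreeLE w i)

theorem wedgeJac_eq_eval_polyJacobian (X : Fin 15 → Fin 3 → ℝ) (u : Fin 3 → ℝ) :
    wedgeJac X u = (polyJacobian (wedgeMapPoly X)).map (eval u) := by
  ext m n
  simp only [wedgeJac, polyJacobian, Matrix.of_apply, Matrix.map_apply, ← eval_wedgeMapPoly,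
    fderiv_eval_single]

theorem wedgeMetric_eq_eval_wedgeMetricPoly (X : Fin 15 → Fin 3 → ℝ) (u : Fin 3 → ℝ) :
    wedgeMetric X u = eval u (wedgeMetricPoly X) := by
  rw [wedgeMetric, wedgeJac_eq_eval_polyJacobian, wedgeMetricPoly, RingHom.map_det,
    RingHom.mapMatrix_apply]

/-- the metric is a polynomial whose monomials `ξ^a η^b ζ^c` satisfy
`a + b ≤ 4`, `c ≤ 5` and `a + b + c ≤ 6`; in particular it has total degree at most 6. -/
theorem wedgeMetric_is_polynomial (X : Fin 15 → Fin 3 → ℝ) :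
    ∃ p : MvPolynomial (Fin 3) ℝ,
      (∀ d ∈ p.support, d 0 + d 1 ≤ 4 ∧ d 2 ≤ 5 ∧ d 0 + d 1 + d 2 ≤ 6) ∧
      p.totalDegree ≤ 6 ∧
      ∀ u : Fin 3 → ℝ, wedgeMetric X u = MvPolynomial.eval u p := by
  have weight_le (w : Fin 3 → ℕ) {d : Fin 3 →₀ ℕ} (hd : d ∈ (wedgeMetricPoly X).support) :
      d 0 * w 0 + d 1 * w 1 + d 2 * w 2 ≤ ∑ n, (wedgeShapeDegree w - w n) := by
    simpa [Finsupp.weight_eq_sum, Fin.sum_univ_three] using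
      mem_weightedDegreeLE.1 (wedgeMetricPoly_mem_weightedDegreeLE X w) d hd
  have support_le : ∀ d ∈ (wedgeMetricPoly X).support,
      d 0 + d 1 ≤ 4 ∧ d 2 ≤ 5 ∧ d 0 + d 1 + d 2 ≤ 6 := fun d hd =>
    ⟨by simpa [Fin.sum_univ_three, wedgeShapeDegree] using weight_le ![1, 1, 0] hd,
      by simpa [Fin.sum_univ_three, wedgeShapeDegree] using weight_le ![0, 0, 1] hd,
      by simpa [Fin.sum_univ_three, wedgeShapeDegree] using weight_le ![1, 1, 1] hd⟩
  refine ⟨wedgeMetricPoly X, support_le, Finset.sup_le fun d hd => ?_,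
    wedgeMetric_eq_eval_wedgeMetricPoly X⟩
  simpa [Finsupp.sum_fintype, Fin.sum_univ_three] using (support_le d hd).2.2
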